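/- arXiv:2510.27225 — 2 statements merged into one kernel-verified Lean document; each statement's English description precedes it below -/
import Mathlib

section
/- Suppose b ∈ C^1(ℝ^d; ℝ^d) (bounded with bounded continuous derivative ∇b), x₀^n = x₀ for all n, and the driving path t ↦ B_t is almost surely continuously differentiable with derivative B′ that is ε′-Hölder continuous for some ε′ > 0, and suppose X^n_t → X_t almost surely uniformly on [0,1] as n → ∞. Then for every t ∈ [0,1], the limit c(t) := lim_{n→∞} n (X_t − X^n_t) exists almost surely, and c satisfies the linear ODE c′(t) = ∇b(X_t) c(t) + (1/2) ∇b(X_t) ( b(X_t) + B′_t ) with c(0) = 0. -/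
open MeasureTheory ProbabilityTheory Filter Set

noncomputable section

/-- `ℝ^d` as Euclidean space. -/
abbrev Euc (d : ℕ) := EuclideanSpace ℝ (Fin d)

/-- The grid point `k_n(t) = ⌊nt⌋/n`. -/
def kn (n : ℕ) (t : ℝ) : ℝ := ⌊(n : ℝ) * t⌋ / n

end


lemma kn_nonneg (n : ℕ) {t : ℝ} (ht : 0 ≤ t) : 0 ≤ kn n t := by
  unfold kn
  have : (0:ℤ) ≤ ⌊(n:ℝ) * t⌋ := Int.floor_nonneg.2 (by positivity)
  have : (0:ℝ) ≤ (⌊(n:ℝ) * t⌋ : ℝ) := by exact_mod_cast this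
  positivity

lemma kn_le {n : ℕ} (hn : 0 < n) (t : ℝ) : kn n t ≤ t := by
  unfold kn
  have hn' : (0:ℝ) < n := by exact_mod_cast hn
  rw [div_le_iff₀ hn']
  have := Int.floor_le ((n:ℝ) * t)
  linarith

lemma sub_kn_le {n : ℕ} (hn : 0 < n) (t : ℝ) : (n:ℝ) * (t - kn n t) ≤ 1 := by
  unfold kn
  have hn' : (0:ℝ) < n := by exact_mod_cast hn
  have := Int.lt_floor_add_one ((n:ℝ) * t)
  rw [mul_sub, mul_div_cancel₀ _ hn'.ne']
  linarith

lemma kn_mem {n : ℕ} (hn : 0 < n) {t : ℝ} (ht : t ∈ Icc (0:ℝ) 1) : kn n t ∈ Icc (0:ℝ) 1 :=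
  ⟨kn_nonneg n ht.1, (kn_le hn t).trans ht.2⟩

lemma kn_cell {n : ℕ} (hn : 0 < n) (j : ℕ) {r : ℝ} (h1 : (j:ℝ) / n ≤ r) (h2 : r < ((j:ℝ) + 1) / n) :
    kn n r = (j:ℝ) / n := by
  unfold kn
  have hn' : (0:ℝ) < n := by exact_mod_cast hn
  have : ⌊(n:ℝ) * r⌋ = (j:ℤ) := by
    rw [Int.floor_eq_iff]
    rw [div_le_iff₀ hn'] at h1
    rw [lt_div_iff₀ hn'] at h2
    push_cast
    constructor <;> linarith
  rw [this]
  simp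

lemma integrable_kn {d : ℕ} (n : ℕ) (f : ℝ → Euc d) (C : ℝ) (hf : ∀ x, ‖f x‖ ≤ C) (a s : ℝ) :
    IntervalIntegrable (fun r => f (kn n r)) volume a s := by
  have hm : Measurable (fun r => f (kn n r)) := by
    have h1 : Measurable (fun k : ℤ => f ((k:ℝ) / n)) := measurable_from_top
    have h2 : Measurable (fun r : ℝ => ⌊(n:ℝ) * r⌋) :=
      Int.measurable_floor.comp (measurable_const.mul measurable_id)
    exact h1.comp h2
  refine (intervalIntegrable_const (c := C)).mono_fun hm.aestronglyMeasurable ?_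
  refine Eventually.of_forall fun r => ?_
  exact (hf _).trans (le_abs_self C)

lemma intervalIntegrable_sub {E : Type*} [NormedAddCommGroup E] {f : ℝ → E}
    (hf : ContinuousOn f (Icc (0:ℝ) 1)) {a s : ℝ} (ha : a ∈ Icc (0:ℝ) 1) (hs : s ∈ Icc (0:ℝ) 1) :
    IntervalIntegrable f volume a s :=
  (hf.mono (uIcc_subset_Icc ha hs)).intervalIntegrable

lemma ftc_Icc {E : Type*} [NormedAddCommGroup E] [NormedSpace ℝ E] [CompleteSpace E] {f : ℝ → E}
    (hf : ContinuousOn f (Icc (0:ℝ) 1)) {t : ℝ} (ht : t ∈ Icc (0:ℝ) 1) :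
    HasDerivWithinAt (fun u => ∫ r in (0:ℝ)..u, f r) (f t) (Icc (0:ℝ) 1) t := by
  have : Fact (t ∈ Icc (0:ℝ) 1) := ⟨ht⟩
  refine intervalIntegral.integral_hasDerivWithinAt_right
    (intervalIntegrable_sub hf ⟨le_rfl, zero_le_one⟩ ht) (t := Icc (0:ℝ) 1) ?_ (hf t ht)
  exact hf.stronglyMeasurableAtFilter_nhdsWithin measurableSet_Icc t

lemma gronwall_int {u : ℝ → ℝ} (hu : ContinuousOn u (Icc (0:ℝ) 1)) (hu0 : ∀ t ∈ Icc (0:ℝ) 1, 0 ≤ u t)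
    {a L : ℝ} (ha : 0 ≤ a) (hL : 0 ≤ L)
    (h : ∀ t ∈ Icc (0:ℝ) 1, u t ≤ a + L * ∫ r in (0:ℝ)..t, u r) :
    ∀ t ∈ Icc (0:ℝ) 1, u t ≤ a * Real.exp L := by
  have hI : ∀ t ∈ Icc (0:ℝ) 1, 0 ≤ ∫ r in (0:ℝ)..t, u r := fun t ht =>
    intervalIntegral.integral_nonneg ht.1 (fun r hr => hu0 r ⟨hr.1, hr.2.trans ht.2⟩)
  have hd : ∀ t ∈ Icc (0:ℝ) 1,
      HasDerivWithinAt (fun t => a + L * ∫ r in (0:ℝ)..t, u r) (L * u t) (Icc (0:ℝ) 1) t :=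
    fun t ht => ((ftc_Icc hu ht).const_mul L).const_add a
  have key := norm_le_gronwallBound_of_norm_deriv_right_le (a := 0) (b := 1) (δ := a) (K := L) (ε := 0)
    (f := fun t => a + L * ∫ r in (0:ℝ)..t, u r) (f' := fun t => L * u t)
    (fun t ht => (hd t ht).continuousWithinAt)
    (fun t ht => by
      exact (hd t ⟨ht.1, ht.2.le⟩).mono_of_mem_nhdsWithin (Icc_mem_nhdsGE_of_mem ht))
    (by simp [abs_of_nonneg ha])
    (fun t ht => by
      have ht' : t ∈ Icc (0:ℝ) 1 := ⟨ht.1, ht.2.le⟩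
      have h1 := hI t ht'
      rw [Real.norm_eq_abs, Real.norm_eq_abs, abs_of_nonneg (mul_nonneg hL (hu0 t ht')),
        abs_of_nonneg (by positivity), add_zero]
      exact mul_le_mul_of_nonneg_left (h t ht') hL)
  intro t ht
  have h2 := key t ht
  rw [gronwallBound_ε0, sub_zero] at h2
  refine (h t ht).trans ((le_abs_self _).trans (h2.trans ?_))
  have : L * t ≤ L := by nlinarith [ht.1, ht.2]
  gcongr

lemma lin_unif {d : ℕ} {b : Euc d → Euc d} {Db : Euc d → (Euc d →L[ℝ] Euc d)}
    (hb_deriv : ∀ x, HasFDerivAt b (Db x) x) (hDb_cont : Continuous Db)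
    {K : Set (Euc d)} (hK : IsCompact K) {ε : ℝ} (hε : 0 < ε) :
    ∃ δ > 0, ∀ z ∈ K, ∀ x y, ‖x - z‖ < δ → ‖y - z‖ < δ →
      ‖b x - b y - Db z (x - y)‖ ≤ ε * ‖x - y‖ := by
  have h := hK.uniformContinuousAt_of_continuousAt Db (fun a _ => hDb_cont.continuousAt)
    (Metric.dist_mem_uniformity hε)
  obtain ⟨δ, hδ, hd⟩ := Metric.mem_uniformity_dist.1 h
  refine ⟨δ, hδ, fun z hz x y hx hy => ?_⟩
  refine (convex_ball z δ).norm_image_sub_le_of_norm_hasFDerivWithin_le' (f' := Db)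
    (fun w _ => (hb_deriv w).hasFDerivWithinAt) (fun w hw => ?_) ?_ ?_
  · have : dist (Db z) (Db w) < ε := hd (by rw [dist_comm]; exact hw) hz
    rw [dist_comm, dist_eq_norm] at this
    exact this.le
  · rw [mem_ball_iff_norm]; exact hy
  · rw [mem_ball_iff_norm]; exact hx

lemma cell_bound {E : Type*} [NormedAddCommGroup E] [NormedSpace ℝ E] [CompleteSpace E]
    {g h : ℝ → E}
    (hg : ∀ t ∈ Icc (0:ℝ) 1, HasDerivWithinAt g (h t) (Icc (0:ℝ) 1) t)
    {a s ω N : ℝ} (ha : 0 ≤ a) (has : a < s) (hs : s ≤ 1) (hN : N * (s - a) = 1)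
    (hω : ∀ r ∈ Icc a s, ‖h r - h a‖ ≤ ω) :
    ‖N • (∫ r in a..s, (g r - g a)) - (1/2:ℝ) • (g s - g a)‖ ≤ 2 * ω * (s - a) := by
  have hω0 : 0 ≤ ω := (norm_nonneg _).trans (hω a ⟨le_rfl, has.le⟩)
  have hsub : Icc a s ⊆ Icc (0:ℝ) 1 := Icc_subset_Icc ha hs
  have h1 : ∀ r ∈ Icc a s, ‖g r - g a - (r - a) • h a‖ ≤ ω * (r - a) := by
    intro r hr
    have := norm_image_sub_le_of_norm_deriv_le_segment' (a := a) (b := s) (C := ω)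
      (f := fun r => g r - (r - a) • h a) (f' := fun r => h r - (1:ℝ) • h a)
      (fun x hx => ((hg x (hsub hx)).mono hsub).sub
        ((((hasDerivAt_id x).sub_const a).smul_const (h a)).hasDerivWithinAt))
      (fun x hx => by simpa using hω x ⟨hx.1, hx.2.le⟩) r hr
    have e : g r - (r - a) • h a - (g a - (a - a) • h a) = g r - g a - (r - a) • h a := by
      simp; abel
    simpa only [e] using this
  have hgc : ContinuousOn g (Icc (0:ℝ) 1) := fun t ht => (hg t ht).continuousWithinAt
  have hDiffI : IntervalIntegrable (fun r => g r - g a) volume a s :=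
    (intervalIntegrable_sub hgc ⟨ha, has.le.trans hs⟩ ⟨ha.trans has.le, hs⟩).sub
      intervalIntegrable_const
  have hDiffI2 : IntervalIntegrable (fun r => (r - a) • h a) volume a s := by
    apply Continuous.intervalIntegrable; fun_prop
  have h2 : ‖∫ r in a..s, (g r - g a - (r - a) • h a)‖ ≤ (ω * (s - a)) * |s - a| := by
    refine intervalIntegral.norm_integral_le_of_norm_le_const fun r hr => ?_
    rw [uIoc_of_le has.le] at hr
    refine (h1 r ⟨hr.1.le, hr.2⟩).trans ?_
    have := hr.2
    gcongr
  have h3 : ∫ r in a..s, (r - a) • h a = ((s - a)^2 / 2) • h a := by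
    rw [intervalIntegral.integral_smul_const]
    congr 1
    rw [intervalIntegral.integral_comp_sub_right (fun x => x)]
    rw [integral_id]; ring
  rw [intervalIntegral.integral_sub hDiffI hDiffI2, h3, abs_of_pos (by linarith)] at h2
  have h4 := h1 s ⟨has.le, le_rfl⟩
  have hN0 : 0 < N := by
    by_contra hc
    push Not at hc
    nlinarith
  have e : N • (∫ r in a..s, (g r - g a)) - (1/2:ℝ) • (g s - g a)
      = N • ((∫ r in a..s, (g r - g a)) - ((s - a)^2 / 2) • h a)
        - (1/2:ℝ) • (g s - g a - (s - a) • h a) := by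
    have : N * ((s - a)^2/2) = 1/2 * (s - a) := by
      have : N * ((s - a)^2/2) = (N * (s - a)) * (s-a) / 2 := by ring
      rw [this, hN]; ring
    rw [smul_sub, smul_sub, smul_sub, smul_sub, smul_smul, this, smul_smul]
    abel
  rw [e]
  refine (norm_sub_le _ _).trans ?_
  rw [norm_smul, norm_smul, Real.norm_eq_abs, abs_of_pos hN0]
  have h5 : N * ‖(∫ r in a..s, (g r - g a)) - ((s - a)^2 / 2) • h a‖ ≤ ω * (s - a) := by
    calc _ ≤ N * (ω * (s - a) * (s - a)) := by gcongr
      _ = (N * (s - a)) * (ω * (s - a)) := by ring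
      _ = _ := by rw [hN, one_mul]
  have h6 : ‖(1/2:ℝ)‖ = 1/2 := by norm_num
  rw [h6]
  nlinarith

lemma trapezoid {d : ℕ} {g h : ℝ → Euc d} {C : ℝ} (hgC : ∀ x, ‖g x‖ ≤ C)
    (hg : ∀ t ∈ Icc (0:ℝ) 1, HasDerivWithinAt g (h t) (Icc (0:ℝ) 1) t)
    (hh : ContinuousOn h (Icc (0:ℝ) 1)) {ε : ℝ} (hε : 0 < ε) :
    ∀ᶠ n : ℕ in atTop, ∀ t ∈ Icc (0:ℝ) 1,
      ‖(n:ℝ) • (∫ r in (0:ℝ)..t, (g r - g (kn n r))) - (1/2:ℝ) • (g t - g 0)‖ ≤ ε := by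
  obtain ⟨M, hM⟩ := isCompact_Icc.exists_bound_of_continuousOn hh
  have hM0 : 0 ≤ M := (norm_nonneg _).trans (hM 0 ⟨le_rfl, zero_le_one⟩)
  have hLip : ∀ r ∈ Icc (0:ℝ) 1, ∀ s ∈ Icc (0:ℝ) 1, ‖g r - g s‖ ≤ M * ‖r - s‖ := fun r hr s hs =>
    (convex_Icc (0:ℝ) 1).norm_image_sub_le_of_norm_hasDerivWithin_le hg hM hs hr
  have huc := isCompact_Icc.uniformContinuousOn_of_continuous hh
  rw [Metric.uniformContinuousOn_iff] at huc
  obtain ⟨δ, hδ, hδh⟩ := huc (ε/4) (by positivity)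
  have hgc : ContinuousOn g (Icc (0:ℝ) 1) := fun t ht => (hg t ht).continuousWithinAt
  have hz : Tendsto (fun n : ℕ => 1 / (n:ℝ)) atTop (nhds 0) := tendsto_one_div_atTop_nhds_zero_nat
  have hz2 : Tendsto (fun n : ℕ => (2 * M) * (1 / (n:ℝ))) atTop (nhds 0) := by
    simpa using hz.const_mul (2 * M)
  filter_upwards [eventually_gt_atTop 0, hz.eventually (gt_mem_nhds hδ),
    hz2.eventually (gt_mem_nhds (half_pos hε))] with n hn h1 h2
  have hn' : (0:ℝ) < n := by exact_mod_cast hn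
  have hDiffI : ∀ a ∈ Icc (0:ℝ) 1, ∀ s ∈ Icc (0:ℝ) 1,
      IntervalIntegrable (fun r => g r - g (kn n r)) volume a s := fun a ha s hs =>
    (intervalIntegrable_sub hgc ha hs).sub (integrable_kn n g C hgC a s)
  have hmem : ∀ j : ℕ, j ≤ n → (j:ℝ) / n ∈ Icc (0:ℝ) 1 := fun j hj =>
    ⟨by positivity, by rw [div_le_one hn']; exact_mod_cast hj⟩
  have h0 : (0:ℝ) ∈ Icc (0:ℝ) 1 := ⟨le_rfl, zero_le_one⟩
  have key : ∀ j : ℕ, j ≤ n →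
      ‖(n:ℝ) • (∫ r in (0:ℝ)..((j:ℝ)/n), (g r - g (kn n r))) - (1/2:ℝ) • (g ((j:ℝ)/n) - g 0)‖
        ≤ 2 * (ε/4) * ((j:ℝ)/n) := by
    intro j
    induction j with
    | zero => intro _; simp
    | succ j ih =>
      intro hj
      have ih := ih (by omega)
      have m1 := hmem j (by omega)
      have m2 := hmem (j+1) hj
      push_cast at m2 ⊢
      have hlt : (j:ℝ)/n < ((j:ℝ)+1)/n := by gcongr; linarith
      have hd : ((j:ℝ)+1)/n - (j:ℝ)/n = 1/n := by ring
      rw [← intervalIntegral.integral_add_adjacent_intervals (hDiffI 0 h0 _ m1) (hDiffI _ m1 _ m2)]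
      have hc : ∫ r in ((j:ℝ)/n)..(((j:ℝ)+1)/n), (g r - g (kn n r))
          = ∫ r in ((j:ℝ)/n)..(((j:ℝ)+1)/n), (g r - g ((j:ℝ)/n)) := by
        refine intervalIntegral.integral_congr_Ioo_of_le hlt.le fun r hr => ?_
        simp only [kn_cell hn j hr.1.le hr.2]
      have cb := cell_bound hg (N := n) (ω := ε/4) m1.1 hlt m2.2 (by rw [hd]; field_simp)
        (fun r hr => by
          have hr' : r ∈ Icc (0:ℝ) 1 := ⟨m1.1.trans hr.1, hr.2.trans m2.2⟩
          have := hδh r hr' _ m1 (by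
            rw [Real.dist_eq, abs_of_nonneg (by linarith [hr.1])]
            linarith [hr.2])
          rw [dist_eq_norm] at this
          exact this.le)
      rw [hc]
      refine le_trans (le_of_eq ?_) ((norm_add_le _ _).trans (add_le_add ih cb) |>.trans ?_)
      · congr 1
        simp only [smul_add, smul_sub]
        abel
      · apply le_of_eq; ring
  intro t ht
  have hk := kn_mem hn ht
  have hkj : kn n t = ((⌊(n:ℝ) * t⌋₊ : ℕ) : ℝ) / n := by
    unfold kn
    rw [← natCast_floor_eq_intCast_floor (by have := ht.1; positivity)]
  have hj : ⌊(n:ℝ) * t⌋₊ ≤ n := by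
    apply Nat.floor_le_of_le
    have := ht.2
    nlinarith
  have k1 := key _ hj
  rw [← hkj] at k1
  have hsub : t - kn n t ≤ 1/n := by
    rw [le_div_iff₀ hn']
    have := sub_kn_le hn t
    linarith
  have hkt := kn_le hn t
  have k2 : ‖∫ r in (kn n t)..t, (g r - g (kn n r))‖ ≤ (M * (1/n)) * |t - kn n t| := by
    refine intervalIntegral.norm_integral_le_of_norm_le_const fun r hr => ?_
    rw [uIoc_of_le hkt] at hr
    have hr' : r ∈ Icc (0:ℝ) 1 := ⟨hk.1.trans hr.1.le, hr.2.trans ht.2⟩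
    refine (hLip r hr' _ (kn_mem hn hr')).trans ?_
    gcongr
    rw [Real.norm_eq_abs, abs_of_nonneg (by linarith [kn_le hn r]), le_div_iff₀ hn']
    have := sub_kn_le hn r
    linarith
  rw [abs_of_nonneg (by linarith)] at k2
  have k3 := hLip t ht _ hk
  rw [Real.norm_eq_abs, abs_of_nonneg (by linarith)] at k3
  rw [← intervalIntegral.integral_add_adjacent_intervals (hDiffI 0 h0 _ hk) (hDiffI _ hk _ ht)]
  have e : (n:ℝ) • ((∫ r in (0:ℝ)..(kn n t), (g r - g (kn n r)))
        + ∫ r in (kn n t)..t, (g r - g (kn n r))) - (1/2:ℝ) • (g t - g 0)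
      = ((n:ℝ) • (∫ r in (0:ℝ)..(kn n t), (g r - g (kn n r))) - (1/2:ℝ) • (g (kn n t) - g 0))
        + ((n:ℝ) • (∫ r in (kn n t)..t, (g r - g (kn n r))) - (1/2:ℝ) • (g t - g (kn n t))) := by
    simp only [smul_add, smul_sub]
    abel
  rw [e]
  refine (norm_add_le _ _).trans ?_
  have k4 : ‖(n:ℝ) • (∫ r in (kn n t)..t, (g r - g (kn n r))) - (1/2:ℝ) • (g t - g (kn n t))‖
      ≤ 2 * M * (1/n) := by
    refine (norm_sub_le _ _).trans ?_
    rw [norm_smul, norm_smul, Real.norm_eq_abs, abs_of_pos hn']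
    have h6 : ‖(1/2:ℝ)‖ = 1/2 := by norm_num
    rw [h6]
    have a1 : (n:ℝ) * ‖∫ r in (kn n t)..t, (g r - g (kn n r))‖ ≤ M * (1/n) := by
      calc _ ≤ (n:ℝ) * (M * (1/n) * (t - kn n t)) := by gcongr
        _ = M * (1/n) * (n * (t - kn n t)) := by ring
        _ ≤ M * (1/n) * 1 := by gcongr; exact sub_kn_le hn t
        _ = _ := mul_one _
    have a2 : ‖g t - g (kn n t)‖ ≤ M * (1/n) := k3.trans (by gcongr)
    have a3 : 0 ≤ M * (1/(n:ℝ)) := by positivity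
    nlinarith
  have k5 : 2 * (ε/4) * kn n t ≤ ε/2 := by nlinarith [hk.1, hk.2]
  linarith

lemma det_main {d : ℕ} (b : Euc d → Euc d) (Db : Euc d → (Euc d →L[ℝ] Euc d)) (Cb : ℝ)
    (hb_deriv : ∀ x, HasFDerivAt b (Db x) x)
    (hDb_cont : Continuous Db)
    (hb_bdd : ∀ x, ‖b x‖ ≤ Cb) (hDb_bdd : ∀ x, ‖Db x‖ ≤ Cb)
    (B B' : ℝ → Euc d) (hB : ∀ t : ℝ, HasDerivAt B (B' t) t)
    (hB' : ContinuousOn B' (Icc (0:ℝ) 1))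
    (x₀ : Euc d) (X : ℝ → Euc d) (Xn : ℕ → ℝ → Euc d)
    (hX : ∀ t ∈ Icc (0:ℝ) 1, X t = x₀ + (∫ r in (0:ℝ)..t, b (X r)) + B t)
    (hXn : ∀ n : ℕ, 0 < n → ∀ t ∈ Icc (0:ℝ) 1,
      Xn n t = x₀ + (∫ r in (0:ℝ)..t, b (Xn n (kn n r))) + B t)
    (hconv : TendstoUniformlyOn Xn X atTop (Icc (0:ℝ) 1)) :
    ∃ cLim : ℝ → Euc d,
      cLim 0 = 0 ∧
      (∀ t ∈ Icc (0:ℝ) 1,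
        Tendsto (fun n : ℕ => (n : ℝ) • (X t - Xn n t)) atTop (nhds (cLim t))) ∧
      (∀ t ∈ Icc (0:ℝ) 1,
        HasDerivWithinAt cLim
          (Db (X t) (cLim t) + (1/2 : ℝ) • Db (X t) (b (X t) + B' t))
          (Icc (0:ℝ) 1) t) := by
  have h0 : (0:ℝ) ∈ Icc (0:ℝ) 1 := ⟨le_rfl, zero_le_one⟩
  have hCb : 0 ≤ Cb := (norm_nonneg _).trans (hb_bdd 0)
  have hbLip : ∀ x y, ‖b x - b y‖ ≤ Cb * ‖x - y‖ := fun x y =>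
    convex_univ.norm_image_sub_le_of_norm_hasFDerivWithin_le (f' := Db)
      (fun w _ => (hb_deriv w).hasFDerivWithinAt) (fun w _ => hDb_bdd w) (mem_univ y) (mem_univ x)
  have hbc : Continuous b := continuous_iff_continuousAt.2 fun x => (hb_deriv x).continuousAt
  have hBc : Continuous B := continuous_iff_continuousAt.2 fun x => (hB x).continuousAt
  have hbn : ∀ n a s, IntervalIntegrable (fun r => b (Xn n (kn n r))) volume a s := fun n a s =>
    integrable_kn n (fun u => b (Xn n u)) Cb (fun u => hb_bdd _) a s
  have hXnc : ∀ n : ℕ, 0 < n → ContinuousOn (Xn n) (Icc (0:ℝ) 1) := by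
    intro n hn
    have : Continuous (fun t => x₀ + (∫ r in (0:ℝ)..t, b (Xn n (kn n r))) + B t) :=
      (continuous_const.add (intervalIntegral.continuous_primitive (hbn n) 0)).add hBc
    exact this.continuousOn.congr (hXn n hn)
  have hXc : ContinuousOn X (Icc (0:ℝ) 1) :=
    hconv.continuousOn
      ((eventually_gt_atTop 0).mono fun n hn => hXnc n hn).frequently
  have hgc : ContinuousOn (fun t => b (X t)) (Icc (0:ℝ) 1) := hbc.comp_continuousOn hXc
  have hXd : ∀ t ∈ Icc (0:ℝ) 1, HasDerivWithinAt X (b (X t) + B' t) (Icc (0:ℝ) 1) t := by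
    intro t ht
    have := ((ftc_Icc hgc ht).const_add x₀).add (hB t).hasDerivWithinAt
    exact this.congr hX (hX t ht)
  have hZc : ContinuousOn (fun t => b (X t) + B' t) (Icc (0:ℝ) 1) := hgc.add hB'
  have hAc : ContinuousOn (fun t => Db (X t)) (Icc (0:ℝ) 1) := hDb_cont.comp_continuousOn hXc
  have hhc : ContinuousOn (fun t => Db (X t) (b (X t) + B' t)) (Icc (0:ℝ) 1) := hAc.clm_apply hZc
  have hgd : ∀ t ∈ Icc (0:ℝ) 1, HasDerivWithinAt (fun t => b (X t))
      (Db (X t) (b (X t) + B' t)) (Icc (0:ℝ) 1) t := fun t ht =>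
    (hb_deriv (X t)).comp_hasDerivWithinAt t (hXd t ht)
  obtain ⟨M, hM⟩ := isCompact_Icc.exists_bound_of_continuousOn hZc
  have hM0 : 0 ≤ M := (norm_nonneg _).trans (hM 0 h0)
  have hXLip : ∀ r ∈ Icc (0:ℝ) 1, ∀ s ∈ Icc (0:ℝ) 1, ‖X r - X s‖ ≤ M * ‖r - s‖ :=
    fun r hr s hs =>
      (convex_Icc (0:ℝ) 1).norm_image_sub_le_of_norm_hasDerivWithin_le hXd hM hs hr
  -- one-step increments of `X`
  have hXk : ∀ n : ℕ, 0 < n → ∀ r ∈ Icc (0:ℝ) 1, (n:ℝ) * ‖X r - X (kn n r)‖ ≤ M := by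
    intro n hn r hr
    have hn' : (0:ℝ) < n := by exact_mod_cast hn
    have := hXLip r hr _ (kn_mem hn hr)
    rw [Real.norm_eq_abs, abs_of_nonneg (by linarith [kn_le hn r])] at this
    calc _ ≤ (n:ℝ) * (M * (r - kn n r)) := by gcongr
      _ = M * (n * (r - kn n r)) := by ring
      _ ≤ M * 1 := by gcongr; exact sub_kn_le hn r
      _ = M := mul_one M
  set Y : ℕ → ℝ → Euc d := fun n t => (n:ℝ) • (X t - Xn n t) with hY
  have hYc : ∀ n : ℕ, 0 < n → ContinuousOn (Y n) (Icc (0:ℝ) 1) := fun n hn =>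
    (hXc.sub (hXnc n hn)).const_smul (n:ℝ)
  have hDiffI : ∀ n : ℕ, ∀ a ∈ Icc (0:ℝ) 1, ∀ s ∈ Icc (0:ℝ) 1,
      IntervalIntegrable (fun r => b (X r) - b (Xn n (kn n r))) volume a s := fun n a ha s hs =>
    (intervalIntegrable_sub hgc ha hs).sub (hbn n a s)
  have hYint : ∀ n : ℕ, 0 < n → ∀ t ∈ Icc (0:ℝ) 1,
      Y n t = (n:ℝ) • ∫ r in (0:ℝ)..t, (b (X r) - b (Xn n (kn n r))) := by
    intro n hn t ht
    rw [intervalIntegral.integral_sub (intervalIntegrable_sub hgc h0 ht) (hbn n 0 t)]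
    simp only [hY]
    congr 1
    rw [hX t ht, hXn n hn t ht]
    abel
  have hYk : ∀ n : ℕ, 0 < n → ∀ δ : ℝ,
      (∀ r ∈ Icc (0:ℝ) 1, ‖b (X r) - b (Xn n (kn n r))‖ ≤ δ) →
      ∀ t ∈ Icc (0:ℝ) 1, ‖Y n t - Y n (kn n t)‖ ≤ δ := by
    intro n hn δ hδ t ht
    have hn' : (0:ℝ) < n := by exact_mod_cast hn
    have hk := kn_mem hn ht
    have hδ0 : 0 ≤ δ := (norm_nonneg _).trans (hδ 0 h0)
    rw [hYint n hn t ht, hYint n hn _ hk, ← smul_sub,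
      intervalIntegral.integral_interval_sub_left (hDiffI n 0 h0 t ht) (hDiffI n 0 h0 _ hk), norm_smul,
      Real.norm_eq_abs, abs_of_pos hn']
    have : ‖∫ r in (kn n t)..t, (b (X r) - b (Xn n (kn n r)))‖ ≤ δ * |t - kn n t| := by
      refine intervalIntegral.norm_integral_le_of_norm_le_const fun r hr => ?_
      rw [uIoc_of_le (kn_le hn t)] at hr
      exact hδ r ⟨hk.1.trans hr.1.le, hr.2.trans ht.2⟩
    rw [abs_of_nonneg (by linarith [kn_le hn t])] at this
    calc _ ≤ (n:ℝ) * (δ * (t - kn n t)) := by gcongr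
      _ = δ * (n * (t - kn n t)) := by ring
      _ ≤ δ * 1 := by gcongr; exact sub_kn_le hn t
      _ = δ := mul_one δ
  -- uniform boundedness
  obtain ⟨K, hK0, hK⟩ : ∃ K : ℝ, 0 ≤ K ∧ ∀ n : ℕ, 0 < n → ∀ t ∈ Icc (0:ℝ) 1, ‖Y n t‖ ≤ K := by
    have ha : 0 ≤ Cb * (M + 2 * Cb) := by positivity
    refine ⟨Cb * (M + 2 * Cb) * Real.exp Cb, by positivity, fun n hn => ?_⟩
    have hn' : (0:ℝ) < n := by exact_mod_cast hn
    refine gronwall_int (u := fun t => ‖Y n t‖) (hYc n hn).norm (fun t _ => norm_nonneg _) ha hCb ?_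
    intro t ht
    have hYi : IntervalIntegrable (fun r => ‖Y n r‖) volume 0 t :=
      intervalIntegrable_sub (hYc n hn).norm h0 ht
    have hpt : ∀ r ∈ Icc (0:ℝ) 1, ‖(n:ℝ) • (b (X r) - b (Xn n (kn n r)))‖
        ≤ Cb * (M + 2 * Cb) + Cb * ‖Y n r‖ := by
      intro r hr
      have e1 := hXk n hn r hr
      have e2 := hYk n hn (2 * Cb) (fun r _ => (norm_sub_le _ _).trans
        (by linarith [hb_bdd (X r), hb_bdd (Xn n (kn n r))])) r hr
      have e3 : ‖Y n (kn n r)‖ = n * ‖X (kn n r) - Xn n (kn n r)‖ := by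
        simp only [hY]; rw [norm_smul, Real.norm_eq_abs, abs_of_pos hn']
      have e4 : ‖Y n (kn n r)‖ ≤ ‖Y n r‖ + 2 * Cb := by
        have := norm_sub_norm_le (Y n (kn n r)) (Y n r)
        rw [norm_sub_rev] at this
        linarith
      have e5 : ‖X r - Xn n (kn n r)‖ ≤ ‖X r - X (kn n r)‖ + ‖X (kn n r) - Xn n (kn n r)‖ :=
        norm_sub_le_norm_sub_add_norm_sub _ _ _
      rw [norm_smul, Real.norm_eq_abs, abs_of_pos hn']
      calc (n:ℝ) * ‖b (X r) - b (Xn n (kn n r))‖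
          ≤ n * (Cb * (‖X r - X (kn n r)‖ + ‖X (kn n r) - Xn n (kn n r)‖)) := by
            gcongr; exact (hbLip _ _).trans (by gcongr)
        _ = Cb * (n * ‖X r - X (kn n r)‖ + ‖Y n (kn n r)‖) := by rw [e3]; ring
        _ ≤ Cb * (M + (‖Y n r‖ + 2 * Cb)) := by gcongr
        _ = _ := by ring
    rw [hYint n hn t ht, ← intervalIntegral.integral_smul]
    refine (intervalIntegral.norm_integral_le_of_norm_le ht.1
      (g := fun r => Cb * (M + 2 * Cb) + Cb * ‖Y n r‖)
      (Eventually.of_forall fun r hr => hpt r ⟨hr.1.le, hr.2.trans ht.2⟩)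
      (intervalIntegrable_const.add (hYi.const_mul Cb))).trans ?_
    rw [intervalIntegral.integral_add intervalIntegrable_const (hYi.const_mul Cb),
      intervalIntegral.integral_const_mul Cb (fun r => ‖Y n r‖), intervalIntegral.integral_const,
      sub_zero, smul_eq_mul]
    have : t * (Cb * (M + 2 * Cb)) ≤ Cb * (M + 2 * Cb) := by nlinarith [ht.2]
    linarith
  -- smallness
  have hsmall : ∀ δ > 0, ∀ᶠ n : ℕ in atTop, ∀ r ∈ Icc (0:ℝ) 1,
      ‖X (kn n r) - X r‖ < δ ∧ ‖Xn n (kn n r) - X r‖ < δ := by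
    intro δ hδ
    have hz : Tendsto (fun n : ℕ => M * (1 / (n:ℝ))) atTop (nhds 0) := by
      simpa using tendsto_one_div_atTop_nhds_zero_nat.const_mul M
    filter_upwards [eventually_gt_atTop 0, hz.eventually (gt_mem_nhds (half_pos hδ)),
      Metric.tendstoUniformlyOn_iff.1 hconv (δ/2) (half_pos hδ)] with n hn h1 h2 r hr
    have hn' : (0:ℝ) < n := by exact_mod_cast hn
    have e1 : ‖X (kn n r) - X r‖ ≤ M * (1/n) := by
      rw [norm_sub_rev, mul_one_div, le_div_iff₀ hn', mul_comm]
      exact hXk n hn r hr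
    have e2 := h2 _ (kn_mem hn hr)
    rw [dist_comm, dist_eq_norm] at e2
    have e3 : ‖Xn n (kn n r) - X r‖ ≤ ‖Xn n (kn n r) - X (kn n r)‖ + ‖X (kn n r) - X r‖ :=
      norm_sub_le_norm_sub_add_norm_sub _ _ _
    constructor <;> linarith
  -- residual
  have hAY : ∀ n : ℕ, 0 < n → ContinuousOn (fun r => Db (X r) (Y n r)) (Icc (0:ℝ) 1) :=
    fun n hn => hAc.clm_apply (hYc n hn)
  have hres : ∀ ε > 0, ∀ᶠ n : ℕ in atTop, ∀ t ∈ Icc (0:ℝ) 1,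
      ‖Y n t - (1/2:ℝ) • (b (X t) - b (X 0)) - ∫ r in (0:ℝ)..t, Db (X r) (Y n r)‖ ≤ ε := by
    intro ε hε
    obtain ⟨δ1, hδ1, hlin⟩ := lin_unif hb_deriv hDb_cont (isCompact_Icc.image_of_continuousOn hXc)
      (ε := ε / (4 * (K + 1))) (by positivity)
    set δ2 := ε / (4 * (Cb + 1)) with hδ2
    have hδ2p : 0 < δ2 := by positivity
    filter_upwards [eventually_gt_atTop 0, trapezoid (fun x => hb_bdd (X x)) hgd hhc (half_pos hε),
      hsmall δ1 hδ1, hsmall (δ2 / (Cb + 1)) (by positivity)] with n hn ht1 hs1 hs2 t ht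
    have hn' : (0:ℝ) < n := by exact_mod_cast hn
    have hbd : ∀ r ∈ Icc (0:ℝ) 1, ‖b (X r) - b (Xn n (kn n r))‖ ≤ δ2 := by
      intro r hr
      have e := (hs2 r hr).2
      rw [norm_sub_rev, lt_div_iff₀ (by positivity)] at e
      refine (hbLip _ _).trans ?_
      nlinarith [norm_nonneg (X r - Xn n (kn n r))]
    have hYk' := hYk n hn δ2 hbd
    have hi1 : IntervalIntegrable (fun r => b (X r) - b (X (kn n r))) volume 0 t :=
      (intervalIntegrable_sub hgc h0 ht).sub
        (integrable_kn n (fun u => b (X u)) Cb (fun u => hb_bdd _) 0 t)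
    have hi2 : IntervalIntegrable (fun r => b (X (kn n r)) - b (Xn n (kn n r))) volume 0 t :=
      (integrable_kn n (fun u => b (X u)) Cb (fun u => hb_bdd _) 0 t).sub (hbn n 0 t)
    have hi3 : IntervalIntegrable (fun r => Db (X r) (Y n r)) volume 0 t :=
      intervalIntegrable_sub (hAY n hn) h0 ht
    have e1 : Y n t = (n:ℝ) • (∫ r in (0:ℝ)..t, (b (X r) - b (X (kn n r))))
        + ∫ r in (0:ℝ)..t, (n:ℝ) • (b (X (kn n r)) - b (Xn n (kn n r))) := by
      rw [hYint n hn t ht, intervalIntegral.integral_smul, ← smul_add,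
        ← intervalIntegral.integral_add hi1 hi2]
      simp
    have e2 : Y n t - (1/2:ℝ) • (b (X t) - b (X 0)) - ∫ r in (0:ℝ)..t, Db (X r) (Y n r)
        = ((n:ℝ) • (∫ r in (0:ℝ)..t, (b (X r) - b (X (kn n r))))
            - (1/2:ℝ) • (b (X t) - b (X 0)))
          + ∫ r in (0:ℝ)..t, ((n:ℝ) • (b (X (kn n r)) - b (Xn n (kn n r))) - Db (X r) (Y n r)) := by
      have hi4 : IntervalIntegrable (fun r => (n:ℝ) • (b (X (kn n r)) - b (Xn n (kn n r))))
          volume 0 t := hi2.smul (n:ℝ)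
      rw [intervalIntegral.integral_sub hi4 hi3, e1]
      abel
    rw [e2]
    have e3 : ‖∫ r in (0:ℝ)..t,
        ((n:ℝ) • (b (X (kn n r)) - b (Xn n (kn n r))) - Db (X r) (Y n r))‖
        ≤ (ε/2) * |t - 0| := by
      refine intervalIntegral.norm_integral_le_of_norm_le_const fun r hr => ?_
      rw [uIoc_of_le ht.1] at hr
      have hr' : r ∈ Icc (0:ℝ) 1 := ⟨hr.1.le, hr.2.trans ht.2⟩
      have f1 := hlin (X r) (mem_image_of_mem X hr') _ _ (hs1 r hr').1 (hs1 r hr').2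
      have f2 : (n:ℝ) • (b (X (kn n r)) - b (Xn n (kn n r))) - Db (X r) (Y n r)
          = (n:ℝ) • (b (X (kn n r)) - b (Xn n (kn n r)) - Db (X r) (X (kn n r) - Xn n (kn n r)))
            - Db (X r) (Y n r - Y n (kn n r)) := by
        have : Db (X r) (Y n (kn n r)) = (n:ℝ) • Db (X r) (X (kn n r) - Xn n (kn n r)) := by
          simp only [hY]; rw [map_smul]
        rw [map_sub (Db (X r)) (Y n r), this, smul_sub (n:ℝ) (b (X (kn n r)) - b (Xn n (kn n r)))]
        abel
      have f3 : ‖Y n (kn n r)‖ = n * ‖X (kn n r) - Xn n (kn n r)‖ := by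
        simp only [hY]; rw [norm_smul, Real.norm_eq_abs, abs_of_pos hn']
      have f4 := hK n hn _ (kn_mem hn hr')
      have f5 : ‖Db (X r) (Y n r - Y n (kn n r))‖ ≤ Cb * δ2 :=
        ((Db (X r)).le_opNorm _).trans
          (mul_le_mul (hDb_bdd _) (hYk' r hr') (norm_nonneg _) hCb)
      have f6 : Cb * δ2 ≤ ε/4 := by
        have : (Cb + 1) * δ2 = ε / 4 := by rw [hδ2]; field_simp
        nlinarith
      have f7 : ε / (4 * (K + 1)) * K ≤ ε/4 := by
        have : ε / (4 * (K + 1)) * (K + 1) = ε / 4 := by field_simp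
        have : 0 < ε / (4 * (K + 1)) := by positivity
        nlinarith
      rw [f2]
      refine (norm_sub_le _ _).trans ?_
      rw [norm_smul, Real.norm_eq_abs, abs_of_pos hn']
      have f8 : (n:ℝ) * ‖b (X (kn n r)) - b (Xn n (kn n r))
          - Db (X r) (X (kn n r) - Xn n (kn n r))‖ ≤ ε / (4 * (K + 1)) * K := by
        calc _ ≤ (n:ℝ) * (ε / (4 * (K + 1)) * ‖X (kn n r) - Xn n (kn n r)‖) := by gcongr
          _ = ε / (4 * (K + 1)) * ‖Y n (kn n r)‖ := by rw [f3]; ring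
          _ ≤ _ := by gcongr
      linarith
    have e4 : (ε/2) * |t - 0| ≤ ε/2 := by
      rw [sub_zero, abs_of_nonneg ht.1]; nlinarith [ht.2]
    exact (norm_add_le _ _).trans (by linarith [ht1 t ht])
  -- Cauchy
  have hcau : UniformCauchySeqOn Y atTop (Icc (0:ℝ) 1) := by
    rw [Metric.uniformCauchySeqOn_iff]
    intro ε hε
    set η := ε / (4 * Real.exp Cb) with hη
    have hηp : 0 < η := by have := Real.exp_pos Cb; positivity
    obtain ⟨N, hN⟩ := eventually_atTop.1 ((hres η hηp).and (eventually_gt_atTop 0))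
    refine ⟨N, fun m hm n hn t ht => ?_⟩
    obtain ⟨hm1, hm0⟩ := hN m hm
    obtain ⟨hn1, hn0⟩ := hN n hn
    have hdc : ContinuousOn (fun t => Y m t - Y n t) (Icc (0:ℝ) 1) := (hYc m hm0).sub (hYc n hn0)
    have := gronwall_int (u := fun t => ‖Y m t - Y n t‖) hdc.norm
      (fun t _ => norm_nonneg _) (a := 2 * η) (by positivity) hCb (fun t ht => by
        have a1 := hm1 t ht
        have a2 := hn1 t ht
        have i1 := intervalIntegrable_sub (hAY m hm0) h0 ht
        have i2 := intervalIntegrable_sub (hAY n hn0) h0 ht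
        have a3 : ‖∫ r in (0:ℝ)..t, (Db (X r) (Y m r) - Db (X r) (Y n r))‖
            ≤ ∫ r in (0:ℝ)..t, Cb * ‖Y m r - Y n r‖ := by
          refine intervalIntegral.norm_integral_le_of_norm_le ht.1
            (Eventually.of_forall fun r hr => ?_)
            ((intervalIntegrable_sub hdc.norm h0 ht).const_mul Cb)
          rw [← map_sub]
          exact ((Db (X r)).le_opNorm _).trans (by gcongr; exact hDb_bdd _)
        rw [intervalIntegral.integral_const_mul] at a3
        rw [intervalIntegral.integral_sub i1 i2] at a3
        set Im := ∫ r in (0:ℝ)..t, Db (X r) (Y m r)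
        set In := ∫ r in (0:ℝ)..t, Db (X r) (Y n r)
        set e := (1/2:ℝ) • (b (X t) - b (X 0))
        have e1 : Y m t - Y n t = (Y m t - e - Im) - (Y n t - e - In) + (Im - In) := by abel
        have e2 : ‖Y m t - Y n t‖ ≤ ‖Y m t - e - Im‖ + ‖Y n t - e - In‖ + ‖Im - In‖ := by
          rw [e1]
          exact (norm_add_le _ _).trans (by gcongr; exact norm_sub_le _ _)
        show ‖Y m t - Y n t‖ ≤ _
        linarith) t ht
    rw [dist_eq_norm]
    have h4 : 2 * η * Real.exp Cb = ε / 2 := by rw [hη]; field_simp; ring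
    rw [h4] at this
    linarith
  have hex : ∀ t ∈ Icc (0:ℝ) 1, ∃ l, Tendsto (fun n => Y n t) atTop (nhds l) := fun t ht =>
    cauchySeq_tendsto_of_complete (hcau.cauchySeq ht)
  choose! c hc using hex
  have huni : TendstoUniformlyOn Y c atTop (Icc (0:ℝ) 1) := hcau.tendstoUniformlyOn_of_tendsto hc
  have hcc : ContinuousOn c (Icc (0:ℝ) 1) :=
    huni.continuousOn ((eventually_gt_atTop 0).mono fun n hn => hYc n hn).frequently
  have hAcc : ContinuousOn (fun r => Db (X r) (c r)) (Icc (0:ℝ) 1) := hAc.clm_apply hcc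
  have heq : ∀ t ∈ Icc (0:ℝ) 1,
      c t = (1/2:ℝ) • (b (X t) - b (X 0)) + ∫ r in (0:ℝ)..t, Db (X r) (c r) := by
    intro t ht
    have hle : ‖c t - (1/2:ℝ) • (b (X t) - b (X 0)) - ∫ r in (0:ℝ)..t, Db (X r) (c r)‖ ≤ 0 := by
      refine le_of_forall_pos_le_add fun ε hε => ?_
      set η := ε / (2 + Cb) with hη
      have hηp : 0 < η := by positivity
      obtain ⟨n, ⟨hr, hu⟩, hn⟩ := (((hres η hηp).and
        (Metric.tendstoUniformlyOn_iff.1 huni η hηp)).and (eventually_gt_atTop 0)).exists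
      have i1 := intervalIntegrable_sub (hAY n hn) h0 ht
      have i2 := intervalIntegrable_sub hAcc h0 ht
      have a1 := hr t ht
      have a2 := hu t ht
      rw [dist_eq_norm] at a2
      have a3 : ‖∫ r in (0:ℝ)..t, (Db (X r) (Y n r) - Db (X r) (c r))‖ ≤ (Cb * η) * |t - 0| := by
        refine intervalIntegral.norm_integral_le_of_norm_le_const fun r hr => ?_
        rw [uIoc_of_le ht.1] at hr
        have := hu r ⟨hr.1.le, hr.2.trans ht.2⟩
        rw [dist_eq_norm, norm_sub_rev] at this
        rw [← map_sub]
        exact ((Db (X r)).le_opNorm _).trans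
          (mul_le_mul (hDb_bdd _) this.le (norm_nonneg _) hCb)
      rw [intervalIntegral.integral_sub i1 i2, sub_zero, abs_of_nonneg ht.1] at a3
      have a4 : Cb * η * t ≤ Cb * η := by
        have : 0 ≤ Cb * η := by positivity
        nlinarith [ht.2]
      have a5 : (2 + Cb) * η = ε := by rw [hη]; field_simp
      set In := ∫ r in (0:ℝ)..t, Db (X r) (Y n r)
      set Ic := ∫ r in (0:ℝ)..t, Db (X r) (c r)
      set e := (1/2:ℝ) • (b (X t) - b (X 0))
      have e1 : c t - e - Ic = (c t - Y n t) + (Y n t - e - In) + (In - Ic) := by abel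
      rw [e1]
      have e2 := norm_add₃_le (a := c t - Y n t) (b := Y n t - e - In) (c := In - Ic)
      linarith
    have := norm_le_zero_iff.1 hle
    rw [sub_sub, sub_eq_zero] at this
    exact this
  refine ⟨c, ?_, hc, ?_⟩
  · rw [heq 0 h0]; simp
  · intro t ht
    have h1 := (((hgd t ht).sub_const (b (X 0))).const_smul (1/2:ℝ)).add (ftc_Icc hAcc ht)
    have h2 := h1.congr heq (heq t ht)
    rw [add_comm]
    exact h2

/-- **Optimality of the rate `n⁻¹`** (Theorem 5.1): if `b ∈ C¹` (bounded with bounded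
continuous derivative `∇b`), `x₀^n = x₀`, the driving path is a.s. continuously
differentiable with `ε'`-Hölder derivative `B'`, and `X^n → X` a.s. uniformly on `[0,1]`,
then a.s. the limit `c(t) := lim_n n (X_t - X^n_t)` exists for every `t ∈ [0,1]` and
satisfies `c'(t) = ∇b(X_t) c(t) + (1/2) ∇b(X_t)(b(X_t) + B'_t)`, `c(0) = 0`. -/
theorem euler_maruyama_rate_optimality
    {Ω : Type*} {m0 : MeasurableSpace Ω} (P : Measure Ω) [IsProbabilityMeasure P]
    (d : ℕ)
    -- drift `b ∈ C¹`: bounded, with bounded continuous derivative `Db = ∇b`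
    (b : Euc d → Euc d) (Db : Euc d → (Euc d →L[ℝ] Euc d)) (Cb : ℝ)
    (hb_deriv : ∀ x, HasFDerivAt b (Db x) x)
    (hDb_cont : Continuous Db)
    (hb_bdd : ∀ x, ‖b x‖ ≤ Cb) (hDb_bdd : ∀ x, ‖Db x‖ ≤ Cb)
    -- the driving path `B` is a.s. `C¹` with `ε'`-Hölder derivative `B'`
    (B B' : ℝ → Ω → Euc d) (ε' : ℝ) (hε' : 0 < ε')
    (hB_smooth : ∀ᵐ ω ∂P,
      (∀ t : ℝ, HasDerivAt (fun u => B u ω) (B' t ω) t) ∧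
      ∃ C : ℝ, ∀ s ∈ Icc (0:ℝ) 1, ∀ t ∈ Icc (0:ℝ) 1,
        ‖B' t ω - B' s ω‖ ≤ C * |t - s| ^ ε')
    -- `X` solves `X_t = x₀ + ∫₀^t b(X_r) dr + B_t` on `[0,1]`
    (x₀ : Euc d) (X : ℝ → Ω → Euc d) (Xn : ℕ → ℝ → Ω → Euc d)
    (hX : ∀ᵐ ω ∂P, ∀ t ∈ Icc (0:ℝ) 1,
      X t ω = x₀ + (∫ r in (0:ℝ)..t, b (X r ω)) + B t ω)
    -- `X^n` is the Euler–Maruyama scheme with the same initial value `x₀^n = x₀`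
    (hXn : ∀ n : ℕ, 0 < n → ∀ᵐ ω ∂P, ∀ t ∈ Icc (0:ℝ) 1,
      Xn n t ω = x₀ + (∫ r in (0:ℝ)..t, b (Xn n (kn n r) ω)) + B t ω)
    -- `X^n → X` a.s. uniformly on `[0,1]`
    (hconv : ∀ᵐ ω ∂P,
      TendstoUniformlyOn (fun n t => Xn n t ω) (fun t => X t ω) atTop (Icc (0:ℝ) 1)) :
    ∀ᵐ ω ∂P, ∃ cLim : ℝ → Euc d,
      -- `c(0) = 0`
      cLim 0 = 0 ∧
      -- the limit `c(t) = lim_n n (X_t - X^n_t)` exists for every `t ∈ [0,1]`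
      (∀ t ∈ Icc (0:ℝ) 1,
        Tendsto (fun n : ℕ => (n : ℝ) • (X t ω - Xn n t ω)) atTop (nhds (cLim t))) ∧
      -- and `c` solves `c'(t) = ∇b(X_t) c(t) + (1/2) ∇b(X_t)(b(X_t) + B'_t)`
      (∀ t ∈ Icc (0:ℝ) 1,
        HasDerivWithinAt cLim
          (Db (X t ω) (cLim t) + (1/2 : ℝ) • Db (X t ω) (b (X t ω) + B' t ω))
          (Icc (0:ℝ) 1) t) := by
  have hXn' : ∀ᵐ ω ∂P, ∀ n : ℕ, 0 < n → ∀ t ∈ Icc (0:ℝ) 1,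
      Xn n t ω = x₀ + (∫ r in (0:ℝ)..t, b (Xn n (kn n r) ω)) + B t ω := by
    rw [ae_all_iff]
    intro n
    by_cases hn : 0 < n
    · filter_upwards [hXn n hn] with ω h _ using h
    · exact Eventually.of_forall fun ω h => absurd h hn
  filter_upwards [hB_smooth, hX, hXn', hconv] with ω h1 h2 h3 h4
  obtain ⟨hB, C, hC⟩ := h1
  refine det_main b Db Cb hb_deriv hDb_cont hb_bdd hDb_bdd (fun t => B t ω) (fun t => B' t ω)
    hB ?_ x₀ (fun t => X t ω) (fun n t => Xn n t ω) h2 h3 h4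
  intro s hs
  have hlim : Tendsto (fun t : ℝ => C * |t - s| ^ ε') (nhdsWithin s (Icc (0:ℝ) 1)) (nhds 0) := by
    have hcont : Continuous (fun t : ℝ => C * |t - s| ^ ε') :=
      continuous_const.mul
        ((continuous_abs.comp (continuous_id.sub continuous_const)).rpow_const
          (fun _ => Or.inr hε'.le))
    have := (hcont.tendsto s).mono_left (nhdsWithin_le_nhds (s := Icc (0:ℝ) 1))
    simpa [Real.zero_rpow hε'.ne'] using this
  refine tendsto_iff_norm_sub_tendsto_zero.2
    (squeeze_zero' (Eventually.of_forall fun _ => norm_nonneg _) ?_ hlim)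
  filter_upwards [self_mem_nhdsWithin] with t ht using hC s hs t ht
end

section
/- Let α ∈ [0,1] and f ∈ C^α(ℝ^d). Then there is a constant N depending only on H, c, α, d such that for every t ∈ (0,1] and all x₁, x₂, x₃, x₄ ∈ ℝ^d, |P_t^H f(x₁) − P_t^H f(x₂) − P_t^H f(x₃) + P_t^H f(x₄)| ≤ N ‖f‖_{C^α} ( t^{H(α−2)} |x₁−x₂| |x₁−x₃| + t^{H(α−1)} |x₁−x₂−x₃+x₄| ). -/
open MeasureTheory Filter Set

noncomputable section

/-- Gaussian density with covariance `σ` times the identity on `ℝ^d`. -/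
def gaussDensity (d : ℕ) (σ : ℝ) (x : Euc d) : ℝ :=
  (2 * Real.pi * σ) ^ (-(d : ℝ) / 2) * Real.exp (-‖x‖ ^ 2 / (2 * σ))

/-- The Gaussian convolution operator `P_t^H f = p_{c t^{2H}} ∗ f`. -/
def heatP (d : ℕ) (c H t : ℝ) (f : Euc d → ℝ) (x : Euc d) : ℝ :=
  ∫ y, gaussDensity d (c * t ^ (2 * H)) (x - y) * f y

/-- The `C^α` norm (`α ∈ [0,1]`): supremum norm plus `α`-Hölder seminorm.
(For `α = 0` this is comparable to the supremum norm.) -/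
def holderNorm (d : ℕ) (α : ℝ) (f : Euc d → ℝ) : ℝ :=
  (⨆ x, |f x|) +
    ⨆ q : {q : Euc d × Euc d // q.1 ≠ q.2}, |f q.1.1 - f q.1.2| / ‖q.1.1 - q.1.2‖ ^ α

end


/-- Unnormalized unit Gaussian convolution. -/
noncomputable def unitQ (d : ℕ) (g : Euc d → ℝ) (x : Euc d) : ℝ :=
  ∫ y, Real.exp (-‖x - y‖ ^ 2 / 2) * g y

lemma gauss_integrable (d : ℕ) (b : ℝ) (hb : 0 < b) :
    Integrable (fun v : Euc d => Real.exp (-‖v‖ ^ 2 / b)) := by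
  have h := GaussianFourier.integrable_cexp_neg_mul_sq_norm_add (V := Euc d) (b := ((1 / b : ℝ) : ℂ))
    (by simpa using hb) 0 0
  refine h.norm.congr (Eventually.of_forall fun v => ?_)
  simp only [Complex.norm_exp]
  congr 1
  have : (-((1 / b : ℝ) : ℂ) * (‖v‖ : ℂ) ^ 2 + 0 * (inner ℝ (0 : Euc d) v : ℝ))
      = ((-(1 / b) * ‖v‖ ^ 2 : ℝ) : ℂ) := by push_cast; ring
  rw [this, Complex.ofReal_re]; ring

/-- The dominating constant. -/
noncomputable def bigM (d : ℕ) : ℝ :=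
  2 * Real.exp 30 * ∫ v : Euc d, Real.exp (-‖v‖ ^ 2 / 4)

lemma abs_exp_sub_one_le' (a b : ℝ) (h : |a| ≤ b) : |Real.exp a - 1| ≤ b * Real.exp b := by
  have hb : 0 ≤ b := (abs_nonneg a).trans h
  have h1 := Real.add_one_le_exp a
  have h2 := Real.add_one_le_exp (-a)
  have h3 : Real.exp a * Real.exp (-a) = 1 := by rw [← Real.exp_add]; simp
  have h4 : 1 ≤ Real.exp b := Real.one_le_exp hb
  have h5 : Real.exp a ≤ Real.exp b := Real.exp_le_exp.2 ((le_abs_self a).trans h)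
  have h6 := abs_le.1 h
  have h7 := Real.exp_pos a
  rw [abs_le]
  constructor
  · nlinarith
  · have : Real.exp a - 1 ≤ a * Real.exp a := by nlinarith
    nlinarith

lemma rpow_le_add_one (r α : ℝ) (hr : 0 ≤ r) (h0 : 0 ≤ α) (h1 : α ≤ 1) : r ^ α ≤ r + 1 := by
  rcases le_total r 1 with h | h
  · exact (Real.rpow_le_one hr h h0).trans (by linarith)
  · calc r ^ α ≤ r ^ (1 : ℝ) := Real.rpow_le_rpow_of_exponent_le h h1
      _ ≤ r + 1 := by simp

lemma weight_bound (r α X : ℝ) (hr : 0 ≤ r) (h0 : 0 ≤ α) (h1 : α ≤ 1)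
    (hX : X ≤ 2 * Real.exp (4 * (r + 1))) :
    Real.exp (-r ^ 2 / 2) * X * r ^ α ≤ 2 * Real.exp 30 * Real.exp (-r ^ 2 / 4) := by
  have h2 : r ^ α ≤ Real.exp (r + 1) :=
    (rpow_le_add_one r α hr h0 h1).trans (by linarith [Real.add_one_le_exp (r + 1)])
  calc Real.exp (-r ^ 2 / 2) * X * r ^ α
      ≤ Real.exp (-r ^ 2 / 2) * (2 * Real.exp (4 * (r + 1))) * Real.exp (r + 1) := by
        have := Real.rpow_nonneg hr α
        gcongr
    _ = 2 * Real.exp (-r ^ 2 / 2 + 4 * (r + 1) + (r + 1)) := by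
        rw [Real.exp_add (-r ^ 2 / 2 + 4 * (r + 1)), Real.exp_add (-r ^ 2 / 2)]; ring
    _ ≤ 2 * Real.exp (30 + -r ^ 2 / 4) := by
        have : -r ^ 2 / 2 + 4 * (r + 1) + (r + 1) ≤ 30 + -r ^ 2 / 4 := by
          nlinarith [sq_nonneg (r - 10)]
        gcongr
    _ = _ := by rw [Real.exp_add]; ring

lemma expo_bound {d : ℕ} (v h : Euc d) (hh : ‖h‖ ≤ 1) :
    |-(inner ℝ v h) - ‖h‖ ^ 2 / 2| ≤ ‖h‖ * (‖v‖ + 1) := by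
  have h1 := abs_le.1 (abs_real_inner_le_norm v h)
  have := norm_nonneg h
  rw [abs_le]; constructor <;> nlinarith

lemma exp_shift {d : ℕ} (v h : Euc d) :
    Real.exp (-‖v + h‖ ^ 2 / 2) =
      Real.exp (-‖v‖ ^ 2 / 2) * Real.exp (-(inner ℝ v h) - ‖h‖ ^ 2 / 2) := by
  rw [← Real.exp_add, norm_add_sq_real]; congr 1; ring

lemma shift_bound {d : ℕ} (v h : Euc d) (hh : ‖h‖ ≤ 1) :
    |Real.exp (-(inner ℝ v h) - ‖h‖ ^ 2 / 2) - 1| ≤ ‖h‖ * Real.exp (2 * (‖v‖ + 1)) := by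
  have hv := norm_nonneg v
  have hn := norm_nonneg h
  refine (abs_exp_sub_one_le' _ _ (expo_bound v h hh)).trans ?_
  have h1 : ‖h‖ * (‖v‖ + 1) ≤ ‖v‖ + 1 := by nlinarith
  have h2 : ‖v‖ + 1 ≤ Real.exp (‖v‖ + 1) := by linarith [Real.add_one_le_exp (‖v‖ + 1)]
  calc ‖h‖ * (‖v‖ + 1) * Real.exp (‖h‖ * (‖v‖ + 1))
      ≤ ‖h‖ * Real.exp (‖v‖ + 1) * Real.exp (‖v‖ + 1) := by gcongr
    _ = _ := by rw [mul_assoc, ← Real.exp_add]; ring_nf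

lemma kernel_first {d : ℕ} (v h : Euc d) (hh : ‖h‖ ≤ 1) (α : ℝ) (h0 : 0 ≤ α) (h1 : α ≤ 1) :
    |Real.exp (-‖v + h‖ ^ 2 / 2) - Real.exp (-‖v‖ ^ 2 / 2)| * ‖v‖ ^ α
      ≤ ‖h‖ * (2 * Real.exp 30 * Real.exp (-‖v‖ ^ 2 / 4)) := by
  have hv := norm_nonneg v
  have hw := weight_bound ‖v‖ α (Real.exp (2 * (‖v‖ + 1))) hv h0 h1 (by
    have : Real.exp (2 * (‖v‖ + 1)) ≤ Real.exp (4 * (‖v‖ + 1)) := by gcongr; norm_num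
    linarith [Real.exp_pos (4 * (‖v‖ + 1))])
  have e : Real.exp (-‖v + h‖ ^ 2 / 2) - Real.exp (-‖v‖ ^ 2 / 2) = Real.exp (-‖v‖ ^ 2 / 2) *
      (Real.exp (-(inner ℝ v h) - ‖h‖ ^ 2 / 2) - 1) := by rw [exp_shift]; ring
  rw [e, abs_mul, Real.abs_exp]
  calc _ ≤ Real.exp (-‖v‖ ^ 2 / 2) * (‖h‖ * Real.exp (2 * (‖v‖ + 1))) * ‖v‖ ^ α := by
        gcongr; exact shift_bound v h hh
    _ = ‖h‖ * (Real.exp (-‖v‖ ^ 2 / 2) * Real.exp (2 * (‖v‖ + 1)) * ‖v‖ ^ α) := by ring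
    _ ≤ _ := by gcongr

lemma kernel_second {d : ℕ} (v h k : Euc d) (hh : ‖h‖ ≤ 1) (hk : ‖k‖ ≤ 1)
    (α : ℝ) (h0 : 0 ≤ α) (h1 : α ≤ 1) :
    |Real.exp (-‖v + h + k‖ ^ 2 / 2) - Real.exp (-‖v + h‖ ^ 2 / 2)
      - Real.exp (-‖v + k‖ ^ 2 / 2) + Real.exp (-‖v‖ ^ 2 / 2)| * ‖v‖ ^ α
      ≤ ‖h‖ * ‖k‖ * (2 * Real.exp 30 * Real.exp (-‖v‖ ^ 2 / 4)) := by
  have hv := norm_nonneg v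
  have hn := norm_nonneg h
  have kn := norm_nonneg k
  set A := -(inner ℝ v h) - ‖h‖ ^ 2 / 2 with hA
  set B := -(inner ℝ v k) - ‖k‖ ^ 2 / 2 with hB
  set D : ℝ := -(inner ℝ h k) with hD
  have eD : |D| ≤ ‖h‖ * ‖k‖ := by rw [hD, abs_neg]; exact abs_real_inner_le_norm h k
  have e : Real.exp (-‖v + h + k‖ ^ 2 / 2) - Real.exp (-‖v + h‖ ^ 2 / 2)
      - Real.exp (-‖v + k‖ ^ 2 / 2) + Real.exp (-‖v‖ ^ 2 / 2) = Real.exp (-‖v‖ ^ 2 / 2) *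
      ((Real.exp A - 1) * (Real.exp B - 1) + Real.exp (A + B) * (Real.exp D - 1)) := by
    have : -(inner ℝ (v + h) k) - ‖k‖ ^ 2 / 2 = B + D := by rw [inner_add_left]; simp [hB, hD]; ring
    rw [exp_shift (v + h) k, this, exp_shift v h, exp_shift v k, Real.exp_add, Real.exp_add]; ring
  have a1 := shift_bound v h hh
  have b1 := shift_bound v k hk
  have d1 : |Real.exp D - 1| ≤ ‖h‖ * ‖k‖ * Real.exp 1 := by
    refine (abs_exp_sub_one_le' _ _ eD).trans ?_
    gcongr; nlinarith
  have ab : Real.exp (A + B) ≤ Real.exp (2 * (‖v‖ + 1)) := by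
    gcongr
    have := (le_abs_self _).trans (expo_bound v h hh)
    have := (le_abs_self _).trans (expo_bound v k hk)
    nlinarith
  have X : |(Real.exp A - 1) * (Real.exp B - 1) + Real.exp (A + B) * (Real.exp D - 1)|
      ≤ ‖h‖ * ‖k‖ * (2 * Real.exp (4 * (‖v‖ + 1))) := by
    refine (abs_add_le _ _).trans ?_
    rw [abs_mul, abs_mul, Real.abs_exp]
    calc _ ≤ (‖h‖ * Real.exp (2 * (‖v‖ + 1))) * (‖k‖ * Real.exp (2 * (‖v‖ + 1)))
          + Real.exp (2 * (‖v‖ + 1)) * (‖h‖ * ‖k‖ * Real.exp 1) := by gcongr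
      _ = ‖h‖ * ‖k‖ * (Real.exp (2 * (‖v‖ + 1) + 2 * (‖v‖ + 1)) + Real.exp (2 * (‖v‖ + 1) + 1)) := by
          rw [Real.exp_add, Real.exp_add]; ring
      _ ≤ ‖h‖ * ‖k‖ * (Real.exp (4 * (‖v‖ + 1)) + Real.exp (4 * (‖v‖ + 1))) := by
          gcongr <;> linarith
      _ = _ := by ring
  have hw := weight_bound ‖v‖ α (2 * Real.exp (4 * (‖v‖ + 1))) hv h0 h1 le_rfl
  rw [e, abs_mul, Real.abs_exp]
  calc _ ≤ Real.exp (-‖v‖ ^ 2 / 2) * (‖h‖ * ‖k‖ * (2 * Real.exp (4 * (‖v‖ + 1)))) * ‖v‖ ^ α := by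
        gcongr
    _ = ‖h‖ * ‖k‖ * (Real.exp (-‖v‖ ^ 2 / 2) * (2 * Real.exp (4 * (‖v‖ + 1))) * ‖v‖ ^ α) := by ring
    _ ≤ _ := by gcongr

lemma unit_integrable {d : ℕ} (g : Euc d → ℝ) (hg : Measurable g) (hb : ∃ C, ∀ x, |g x| ≤ C)
    (x : Euc d) : Integrable (fun y => Real.exp (-‖x - y‖ ^ 2 / 2) * g y) := by
  obtain ⟨C, hC⟩ := hb
  exact ((gauss_integrable d 2 (by norm_num)).comp_sub_left x).mul_bdd (c := C)
    hg.aestronglyMeasurable (Eventually.of_forall hC)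

lemma unitQ_sub_const {d : ℕ} (g : Euc d → ℝ) (hg : Measurable g) (hb : ∃ C, ∀ x, |g x| ≤ C)
    (a : ℝ) (x : Euc d) : unitQ d (fun y => g y - a) x =
      unitQ d g x - (∫ v : Euc d, Real.exp (-‖v‖ ^ 2 / 2)) * a := by
  unfold unitQ
  have h1 : Integrable (fun y => Real.exp (-‖x - y‖ ^ 2 / 2) * a) :=
    ((gauss_integrable d 2 (by norm_num)).comp_sub_left x).mul_const a
  simp only [mul_sub]
  rw [integral_sub (unit_integrable g hg hb x) h1, integral_mul_const,
    integral_sub_left_eq_self (fun v : Euc d => Real.exp (-‖v‖ ^ 2 / 2)) volume x]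

lemma sub_const_bdd {d : ℕ} (g : Euc d → ℝ) (hb : ∃ C, ∀ x, |g x| ≤ C) (a : ℝ) :
    ∃ C, ∀ x, |g x - a| ≤ C := by
  obtain ⟨C, hC⟩ := hb
  exact ⟨C + |a|, fun x => (abs_sub _ _).trans (by linarith [hC x])⟩

lemma bound_integral {d : ℕ} (x : Euc d) (F : Euc d → ℝ) (m : ℝ)
    (hF : ∀ y, |F y| ≤ m * (2 * Real.exp 30 * Real.exp (-‖x - y‖ ^ 2 / 4))) :
    |∫ y, F y| ≤ m * bigM d := by
  have hi : Integrable (fun y : Euc d => m * (2 * Real.exp 30 * Real.exp (-‖x - y‖ ^ 2 / 4))) :=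
    (((gauss_integrable d 4 (by norm_num)).comp_sub_left x).const_mul _).const_mul _
  have := norm_integral_le_of_norm_le (f := F) hi (Eventually.of_forall hF)
  refine this.trans (le_of_eq ?_)
  rw [integral_const_mul, integral_const_mul,
    integral_sub_left_eq_self (fun v : Euc d => Real.exp (-‖v‖ ^ 2 / 4)) volume x, bigM]

lemma bigM_nonneg (d : ℕ) : 0 ≤ bigM d := by
  unfold bigM
  have : 0 ≤ ∫ v : Euc d, Real.exp (-‖v‖ ^ 2 / 4) := integral_nonneg fun _ => (Real.exp_pos _).le
  positivity

lemma unit_first {d : ℕ} (g : Euc d → ℝ) (hg : Measurable g) (hb : ∃ C, ∀ x, |g x| ≤ C)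
    (α : ℝ) (h0 : 0 ≤ α) (h1 : α ≤ 1) (K : ℝ) (hK : 0 ≤ K)
    (hgK : ∀ x y, |g x - g y| ≤ K * ‖x - y‖ ^ α) (x h : Euc d) :
    |unitQ d g (x + h) - unitQ d g x| ≤ K * ‖h‖ * bigM d := by
  rcases le_total ‖h‖ 1 with hh | hh
  · have e : unitQ d g (x + h) - unitQ d g x =
        ∫ y, (Real.exp (-‖(x - y) + h‖ ^ 2 / 2) - Real.exp (-‖x - y‖ ^ 2 / 2)) * (g y - g x) := by
      have hm : Measurable (fun y => g y - g x) := hg.sub_const _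
      have hbb := sub_const_bdd g hb (g x)
      have e1 := unitQ_sub_const g hg hb (g x) (x + h)
      have e2 := unitQ_sub_const g hg hb (g x) x
      have : unitQ d g (x + h) - unitQ d g x =
        unitQ d (fun y => g y - g x) (x + h) - unitQ d (fun y => g y - g x) x := by
        rw [e1, e2]; ring
      rw [this]; unfold unitQ
      rw [← integral_sub (unit_integrable _ hm hbb _) (unit_integrable _ hm hbb _)]
      congr 1; ext y
      rw [show x + h - y = x - y + h by abel]; ring
    rw [e]
    refine bound_integral x _ _ fun y => ?_
    rw [abs_mul]
    have k1 := kernel_first (x - y) h hh α h0 h1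
    have k2 := hgK y x
    rw [norm_sub_rev y x] at k2
    calc _ ≤ |Real.exp (-‖(x - y) + h‖ ^ 2 / 2) - Real.exp (-‖x - y‖ ^ 2 / 2)| *
          (K * ‖x - y‖ ^ α) := by gcongr
      _ = K * (|Real.exp (-‖(x - y) + h‖ ^ 2 / 2) - Real.exp (-‖x - y‖ ^ 2 / 2)| *
          ‖x - y‖ ^ α) := by ring
      _ ≤ K * (‖h‖ * (2 * Real.exp 30 * Real.exp (-‖x - y‖ ^ 2 / 4))) := by gcongr
      _ = _ := by ring
  · have e : ∀ z, unitQ d g z = ∫ y, Real.exp (-‖x - y‖ ^ 2 / 2) * g (y + (z - x)) := fun z => by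
      unfold unitQ
      rw [← integral_add_right_eq_self _ (z - x)]
      congr 1; ext y
      rw [show z - (y + (z - x)) = x - y by abel]
    have hi : ∀ w, Integrable (fun y => Real.exp (-‖x - y‖ ^ 2 / 2) * g (y + w)) := fun w =>
      unit_integrable (fun y => g (y + w)) (hg.comp (measurable_add_const w))
        (hb.imp fun C hC y => hC _) x
    rw [e, e x, ← integral_sub (hi _) (hi _)]
    refine bound_integral x _ _ fun y => ?_
    rw [← mul_sub, abs_mul, Real.abs_exp]
    have k2 := hgK (y + (x + h - x)) (y + (x - x))
    rw [show (y + (x + h - x)) - (y + (x - x)) = h by abel] at k2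
    have k3 : ‖h‖ ^ α ≤ ‖h‖ := by
      simpa using Real.rpow_le_rpow_of_exponent_le hh h1
    have k4 : Real.exp (-‖x - y‖ ^ 2 / 2) ≤ 2 * Real.exp 30 * Real.exp (-‖x - y‖ ^ 2 / 4) := by
      have a1 : Real.exp (-‖x - y‖ ^ 2 / 2) ≤ Real.exp (-‖x - y‖ ^ 2 / 4) := by
        apply Real.exp_le_exp.2; nlinarith [sq_nonneg ‖x - y‖]
      have a2 : 1 ≤ Real.exp 30 := Real.one_le_exp (by norm_num)
      nlinarith [Real.exp_pos (-‖x - y‖ ^ 2 / 4)]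
    calc _ ≤ (2 * Real.exp 30 * Real.exp (-‖x - y‖ ^ 2 / 4)) * (K * ‖h‖) := by
          gcongr; exact k2.trans (by gcongr)
      _ = _ := by ring

lemma unit_second {d : ℕ} (g : Euc d → ℝ) (hg : Measurable g) (hb : ∃ C, ∀ x, |g x| ≤ C)
    (α : ℝ) (h0 : 0 ≤ α) (h1 : α ≤ 1) (K : ℝ) (hK : 0 ≤ K)
    (hgK : ∀ x y, |g x - g y| ≤ K * ‖x - y‖ ^ α) (x h k : Euc d) :
    |unitQ d g (x + h + k) - unitQ d g (x + h) - unitQ d g (x + k) + unitQ d g x|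
      ≤ 2 * (K * (‖h‖ * ‖k‖) * bigM d) := by
  have hM := bigM_nonneg d
  rcases le_total 1 ‖h‖ with hh | hh
  · have a1 := unit_first g hg hb α h0 h1 K hK hgK (x + h) k
    have a2 := unit_first g hg hb α h0 h1 K hK hgK x k
    have a3 : K * ‖k‖ * bigM d ≤ K * (‖h‖ * ‖k‖) * bigM d := by
      gcongr; exact le_mul_of_one_le_left (norm_nonneg _) hh
    rw [abs_le] at *
    constructor <;> linarith
  rcases le_total 1 ‖k‖ with hk | hk
  · have a1 := unit_first g hg hb α h0 h1 K hK hgK (x + k) h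
    have a2 := unit_first g hg hb α h0 h1 K hK hgK x h
    have a3 : K * ‖h‖ * bigM d ≤ K * (‖h‖ * ‖k‖) * bigM d := by
      gcongr; exact le_mul_of_one_le_right (norm_nonneg _) hk
    rw [show x + k + h = x + h + k by abel] at a1
    rw [abs_le] at *
    constructor <;> linarith
  have hm : Measurable (fun y => g y - g x) := hg.sub_const _
  have hbb := sub_const_bdd g hb (g x)
  have e : unitQ d g (x + h + k) - unitQ d g (x + h) - unitQ d g (x + k) + unitQ d g x =
      ∫ y, (Real.exp (-‖(x - y) + h + k‖ ^ 2 / 2) - Real.exp (-‖(x - y) + h‖ ^ 2 / 2)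
        - Real.exp (-‖(x - y) + k‖ ^ 2 / 2) + Real.exp (-‖x - y‖ ^ 2 / 2)) * (g y - g x) := by
    have ee := fun z => unitQ_sub_const g hg hb (g x) z
    have : unitQ d g (x + h + k) - unitQ d g (x + h) - unitQ d g (x + k) + unitQ d g x =
      unitQ d (fun y => g y - g x) (x + h + k) - unitQ d (fun y => g y - g x) (x + h)
       - unitQ d (fun y => g y - g x) (x + k) + unitQ d (fun y => g y - g x) x := by
      rw [ee, ee, ee, ee]; ring
    have ii := fun z => unit_integrable _ hm hbb z
    rw [this]; unfold unitQ
    rw [← integral_sub' (ii _) (ii _), ← integral_sub' ((ii _).sub (ii _)) (ii _),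
      ← integral_add' (((ii _).sub (ii _)).sub (ii _)) (ii _)]
    congr 1; ext y
    simp only [Pi.sub_apply, Pi.add_apply]
    rw [show x + h + k - y = x - y + h + k by abel, show x + h - y = x - y + h by abel,
      show x + k - y = x - y + k by abel]; ring
  have key : |unitQ d g (x + h + k) - unitQ d g (x + h) - unitQ d g (x + k) + unitQ d g x|
      ≤ K * (‖h‖ * ‖k‖) * bigM d := by
    rw [e]
    refine bound_integral x _ _ fun y => ?_
    rw [abs_mul]
    have k1 := kernel_second (x - y) h k hh hk α h0 h1
    have k2 := hgK y x
    rw [norm_sub_rev y x] at k2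
    refine (mul_le_mul_of_nonneg_left k2 (abs_nonneg _)).trans ?_
    refine le_trans (le_of_eq ?_) ((mul_le_mul_of_nonneg_left k1 hK).trans (le_of_eq ?_)) <;> ring
  have : 0 ≤ K * (‖h‖ * ‖k‖) * bigM d := by positivity
  linarith

lemma heatP_eq (d : ℕ) (c H t s : ℝ) (hs : 0 < s) (hst : c * t ^ (2 * H) = s ^ 2)
    (f : Euc d → ℝ) (x : Euc d) :
    heatP d c H t f x = (2 * Real.pi) ^ (-(d : ℝ) / 2) * unitQ d (fun y => f (s • y)) (s⁻¹ • x) := by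
  unfold heatP unitQ gaussDensity
  rw [hst]
  have h := Measure.integral_comp_smul (volume : Measure (Euc d))
    (fun y => Real.exp (-‖x - y‖ ^ 2 / (2 * s ^ 2)) * f y) s
  have h2 : (fun y : Euc d => Real.exp (-‖s⁻¹ • x - y‖ ^ 2 / 2) * f (s • y)) =
      fun y => Real.exp (-‖x - s • y‖ ^ 2 / (2 * s ^ 2)) * f (s • y) := by
    ext y
    have : x - s • y = s • (s⁻¹ • x - y) := by
      rw [smul_sub, smul_smul, mul_inv_cancel₀ hs.ne', one_smul]
    rw [this, norm_smul, Real.norm_of_nonneg hs.le]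
    congr 2
    field_simp
  rw [h2, h]
  simp only [mul_assoc, finrank_euclideanSpace, Fintype.card_fin, smul_eq_mul]
  rw [integral_const_mul, ← mul_assoc ((2 * Real.pi) ^ (-(d : ℝ) / 2))]
  congr 1
  rw [← mul_assoc, Real.mul_rpow (by positivity) (by positivity)]
  congr 1
  rw [abs_of_pos (by positivity), ← Real.rpow_natCast s 2, ← Real.rpow_mul hs.le,
    ← Real.rpow_natCast s d, ← Real.rpow_neg hs.le]
  congr 1; push_cast; ring

lemma holder_bound (d : ℕ) (α : ℝ) (h0 : 0 ≤ α) (f : Euc d → ℝ) (hb : ∃ C, ∀ x, |f x| ≤ C)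
    (hf : 0 < α → ∃ C, ∀ x y, |f x - f y| ≤ C * ‖x - y‖ ^ α) :
    0 ≤ holderNorm d α f ∧ ∀ x y, |f x - f y| ≤ holderNorm d α f * ‖x - y‖ ^ α := by
  have p1 : 0 ≤ ⨆ x, |f x| := Real.iSup_nonneg fun _ => abs_nonneg _
  have p2 : 0 ≤ ⨆ q : {q : Euc d × Euc d // q.1 ≠ q.2},
      |f q.1.1 - f q.1.2| / ‖q.1.1 - q.1.2‖ ^ α := Real.iSup_nonneg fun _ => by positivity
  have p3 : 0 ≤ holderNorm d α f := add_nonneg p1 p2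
  refine ⟨p3, fun x y => ?_⟩
  by_cases hxy : x = y
  · subst hxy; simp only [sub_self, abs_zero]; positivity
  have hex : ∃ C, ∀ x y, |f x - f y| ≤ C * ‖x - y‖ ^ α := by
    rcases h0.lt_or_eq with h | h
    · exact hf h
    · obtain ⟨C, hC⟩ := hb
      refine ⟨2 * C, fun x y => ?_⟩
      rw [← h, Real.rpow_zero]
      exact (abs_sub _ _).trans (by linarith [hC x, hC y])
  obtain ⟨C, hC⟩ := hex
  have bdd : BddAbove (range fun q : {q : Euc d × Euc d // q.1 ≠ q.2} =>
      |f q.1.1 - f q.1.2| / ‖q.1.1 - q.1.2‖ ^ α) := by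
    refine ⟨C, ?_⟩
    rintro _ ⟨q, rfl⟩
    have : 0 < ‖q.1.1 - q.1.2‖ := norm_pos_iff.2 (sub_ne_zero.2 q.2)
    exact (div_le_iff₀ (Real.rpow_pos_of_pos this _)).2 (hC _ _)
  have q1 := le_ciSup bdd ⟨(x, y), hxy⟩
  have : 0 < ‖x - y‖ := norm_pos_iff.2 (sub_ne_zero.2 hxy)
  refine (div_le_iff₀ (Real.rpow_pos_of_pos this _)).1 (q1.trans ?_)
  unfold holderNorm
  linarith

/-- **Second-order difference estimate for the Gaussian semigroup** (Lemma 3.3, (3.6)):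
for `f ∈ C^α`, `α ∈ [0,1]`, and `t ∈ (0,1]`,
`|P_t^H f(x₁) - P_t^H f(x₂) - P_t^H f(x₃) + P_t^H f(x₄)|
  ≤ N ‖f‖_{C^α} (t^{H(α-2)} |x₁-x₂||x₁-x₃| + t^{H(α-1)} |x₁-x₂-x₃+x₄|)`,
where `N = N(H, c, α, d)`. -/
theorem heat_second_difference_estimate
    (d : ℕ) (H c : ℝ) (hH : 0 < H) (hc : 0 < c)
    (α : ℝ) (hα0 : 0 ≤ α) (hα1 : α ≤ 1) :
    ∃ N : ℝ, ∀ f : Euc d → ℝ,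
      -- `f ∈ C^α` : bounded measurable, and `α`-Hölder when `α > 0`
      Measurable f → (∃ C, ∀ x, |f x| ≤ C) →
      (0 < α → ∃ C, ∀ x y, |f x - f y| ≤ C * ‖x - y‖ ^ α) →
      ∀ t : ℝ, 0 < t → t ≤ 1 → ∀ x₁ x₂ x₃ x₄ : Euc d,
        |heatP d c H t f x₁ - heatP d c H t f x₂
            - heatP d c H t f x₃ + heatP d c H t f x₄|
          ≤ N * holderNorm d α f *
              (t ^ (H * (α - 2)) * ‖x₁ - x₂‖ * ‖x₁ - x₃‖
                + t ^ (H * (α - 1)) * ‖x₁ - x₂ - x₃ + x₄‖) := by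
  have hM := bigM_nonneg d
  set P := (2 * Real.pi) ^ (-(d : ℝ) / 2) with hP
  have hP0 : 0 ≤ P := by positivity
  set c1 := Real.sqrt c with hc1
  have hc1p : 0 < c1 := Real.sqrt_pos.2 hc
  refine ⟨2 * P * bigM d * (c1 ^ (α - 2) + c1 ^ (α - 1)), ?_⟩
  intro f hf hb hh t ht _ x₁ x₂ x₃ x₄
  obtain ⟨hK, hfK⟩ := holder_bound d α hα0 f hb hh
  set K := holderNorm d α f
  have htH : 0 < t ^ H := Real.rpow_pos_of_pos ht _
  set s := c1 * t ^ H with hs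
  have hsp : 0 < s := mul_pos hc1p htH
  have hst : c * t ^ (2 * H) = s ^ 2 := by
    rw [hs, mul_pow, hc1, Real.sq_sqrt hc.le, mul_comm 2 H, Real.rpow_mul ht.le]
    norm_num
  set g : Euc d → ℝ := fun y => f (s • y) with hg
  have hgm : Measurable g := hf.comp (measurable_const_smul s)
  have hgb : ∃ C, ∀ x, |g x| ≤ C := hb.imp fun C hC y => hC _
  have hgK : ∀ x y, |g x - g y| ≤ (K * s ^ α) * ‖x - y‖ ^ α := fun x y => by
    have := hfK (s • x) (s • y)
    rw [← smul_sub, norm_smul, Real.norm_of_nonneg hsp.le,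
      Real.mul_rpow hsp.le (norm_nonneg _), ← mul_assoc] at this
    exact this
  have hKs : 0 ≤ K * s ^ α := by positivity
  simp only [heatP_eq d c H t s hsp hst f]
  have B1 := unit_second g hgm hgb α hα0 hα1 _ hKs hgK (s⁻¹ • x₁) (s⁻¹ • (x₂ - x₁)) (s⁻¹ • (x₃ - x₁))
  have B2 := unit_first g hgm hgb α hα0 hα1 _ hKs hgK
    (s⁻¹ • x₁ + s⁻¹ • (x₂ - x₁) + s⁻¹ • (x₃ - x₁)) (s⁻¹ • (x₁ - x₂ - x₃ + x₄))
  have v2 : s⁻¹ • x₁ + s⁻¹ • (x₂ - x₁) = s⁻¹ • x₂ := by rw [← smul_add]; congr 1; abel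
  have v3 : s⁻¹ • x₁ + s⁻¹ • (x₃ - x₁) = s⁻¹ • x₃ := by rw [← smul_add]; congr 1; abel
  have v4 : s⁻¹ • x₂ + s⁻¹ • (x₃ - x₁) + s⁻¹ • (x₁ - x₂ - x₃ + x₄) = s⁻¹ • x₄ := by
    rw [← smul_add, ← smul_add]; congr 1; abel
  rw [v2, v3] at B1
  rw [v2, v4] at B2
  simp only [norm_smul, norm_inv, Real.norm_of_nonneg hsp.le] at B1 B2
  rw [norm_sub_rev x₂ x₁, norm_sub_rev x₃ x₁] at B1
  have w1 : s ^ α * (s⁻¹ * s⁻¹) = c1 ^ (α - 2) * t ^ (H * (α - 2)) := by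
    rw [Real.rpow_mul ht.le, ← Real.mul_rpow hc1p.le htH.le, ← hs, Real.rpow_sub hsp,
      Real.rpow_two]
    field_simp
  have w2 : s ^ α * s⁻¹ = c1 ^ (α - 1) * t ^ (H * (α - 1)) := by
    rw [Real.rpow_mul ht.le, ← Real.mul_rpow hc1p.le htH.le, ← hs, Real.rpow_sub hsp,
      Real.rpow_one]
    field_simp
  have r1 : 2 * (K * s ^ α * (s⁻¹ * ‖x₁ - x₂‖ * (s⁻¹ * ‖x₁ - x₃‖)) * bigM d) =
      2 * bigM d * K * c1 ^ (α - 2) * (t ^ (H * (α - 2)) * ‖x₁ - x₂‖ * ‖x₁ - x₃‖) := by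
    linear_combination 2 * bigM d * K * ‖x₁ - x₂‖ * ‖x₁ - x₃‖ * w1
  have r2 : K * s ^ α * (s⁻¹ * ‖x₁ - x₂ - x₃ + x₄‖) * bigM d =
      bigM d * K * c1 ^ (α - 1) * (t ^ (H * (α - 1)) * ‖x₁ - x₂ - x₃ + x₄‖) := by
    linear_combination bigM d * K * ‖x₁ - x₂ - x₃ + x₄‖ * w2
  rw [r1] at B1
  rw [r2] at B2
  set T1 := t ^ (H * (α - 2)) * ‖x₁ - x₂‖ * ‖x₁ - x₃‖
  set T2 := t ^ (H * (α - 1)) * ‖x₁ - x₂ - x₃ + x₄‖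
  have hT1 : 0 ≤ T1 := by positivity
  have hT2 : 0 ≤ T2 := by positivity
  set a := c1 ^ (α - 2)
  set b := c1 ^ (α - 1)
  have ha : 0 ≤ a := by positivity
  have hb' : 0 ≤ b := by positivity
  set U := unitQ d g
  have e : P * U (s⁻¹ • x₁) - P * U (s⁻¹ • x₂) - P * U (s⁻¹ • x₃) + P * U (s⁻¹ • x₄) =
      P * ((U (s⁻¹ • x₂ + s⁻¹ • (x₃ - x₁)) - U (s⁻¹ • x₂) - U (s⁻¹ • x₃) + U (s⁻¹ • x₁))
        + (U (s⁻¹ • x₄) - U (s⁻¹ • x₂ + s⁻¹ • (x₃ - x₁)))) := by ring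
  rw [e, abs_mul, abs_of_nonneg hP0]
  calc _ ≤ P * (2 * bigM d * K * a * T1 + bigM d * K * b * T2) := by
        gcongr; exact (abs_add_le _ _).trans (add_le_add B1 B2)
    _ ≤ P * (2 * bigM d * K * a * T1 + bigM d * K * b * T2)
        + P * bigM d * K * (2 * a * T2 + 2 * b * T1 + b * T2) := le_add_of_nonneg_right (by positivity)
    _ = _ := by ring
end
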